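/- Let (a,B_a) be a NIS-Lie superalgebra over a field K of characteristic 2 with B_a even. Let D be an odd derivation of a and a_0 ∈ a_0 satisfy B_a(D(u),v) = B_a(u,D(v)) for all u,v ∈ a, D² = ad_{a_0}, and D(a_0) = 0. Then on g := Kx ⊕ a ⊕ Kx* with x and x* odd, the squaring s_g(rx + u + tx*) := s_a(u) + t²a_0 + tD(u) for rx + u + tx* ∈ g_1, together with the bracket [x,g]_g := 0, [u,v]_g := [u,v]_a + B_a(D(u),v)x for u,v ∈ a, and [x*,u]_g := D(u), defines a Lie superalgebra structure on g; moreover the bilinear form B_g determined by B_g|_{a×a} = B_a, B_g(a,x) = B_g(a,x*) = 0, B_g(x,x*) = 1, B_g(x,x) = B_g(x*,x*) = 0 is even, non-degenerate, symmetric and invariant, so that (g,B_g) is a NIS-Lie superalgebra (called the D_od-extension of (a,B_a) by means of D and a_0). -/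

import Mathlib

/-!
Common definitions: Lie superalgebras in characteristic 2 (encoded by their even
part `g0`, odd part `g1`, bracket components and squaring), NIS forms (even and odd),
homogeneous derivations, isometries, ideals, irreducibility, and the structure
formulas of the various double extensions.
-/

namespace Char2DoubleExt

section Defs

variable (K : Type) [Field K]
variable (g0 g1 h0 h1 : Type)
variable [AddCommGroup g0] [Module K g0] [AddCommGroup g1] [Module K g1]
variable [AddCommGroup h0] [Module K h0] [AddCommGroup h1] [Module K h1]

/-- A Lie superalgebra over a field of characteristic 2: `g0` is the even part,
`g1` the odd part, `br0` the bracket on `g0`, `br1` the action of `g0` on `g1`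
(the mixed bracket, extended symmetrically), `br11` the bracket of two odd
elements, and `sq` the squaring, whose polarization is `br11`. -/
structure SuperAlg : Type where
  br0 : g0 →ₗ[K] g0 →ₗ[K] g0
  br1 : g0 →ₗ[K] g1 →ₗ[K] g1
  br11 : g1 →ₗ[K] g1 →ₗ[K] g0
  sq : g1 → g0
  sq_smul : ∀ (c : K) (f : g1), sq (c • f) = (c * c) • sq f
  sq_add : ∀ f g : g1, sq (f + g) = sq f + sq g + br11 f g
  br0_self : ∀ x : g0, br0 x x = 0
  br11_comm : ∀ f g : g1, br11 f g = br11 g f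
  jacobi0 : ∀ x y z : g0, br0 x (br0 y z) + br0 y (br0 z x) + br0 z (br0 x y) = 0
  act_br : ∀ (x y : g0) (f : g1), br1 (br0 x y) f = br1 x (br1 y f) + br1 y (br1 x f)
  jacobi_mix : ∀ (x : g0) (f g : g1),
    br0 x (br11 f g) + br11 f (br1 x g) + br11 g (br1 x f) = 0
  sq_br0 : ∀ (f : g1) (x : g0), br0 (sq f) x = br11 f (br1 x f)
  sq_br1 : ∀ f g : g1, br1 (sq f) g = br1 (br11 f g) f

/-- A non-degenerate invariant supersymmetric *even* bilinear form on a Lie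
superalgebra in characteristic 2: it pairs `g0` with `g0` (component `B0`) and
`g1` with `g1` (component `B1`); mixed pairings vanish by evenness. -/
structure EvenNIS (S : SuperAlg K g0 g1) : Type where
  B0 : g0 →ₗ[K] g0 →ₗ[K] K
  B1 : g1 →ₗ[K] g1 →ₗ[K] K
  symm0 : ∀ x y, B0 x y = B0 y x
  symm1 : ∀ f g, B1 f g = B1 g f
  alt1 : ∀ f, B1 f f = 0
  nondeg0 : ∀ x, (∀ y, B0 x y = 0) → x = 0
  nondeg1 : ∀ f, (∀ g, B1 f g = 0) → f = 0
  inv0 : ∀ x y z, B0 (S.br0 x y) z = B0 x (S.br0 y z)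
  inv1 : ∀ (x : g0) (f g : g1), B1 (S.br1 x f) g = B0 x (S.br11 f g)
  inv2 : ∀ (f g : g1) (x : g0), B0 (S.br11 f g) x = B1 f (S.br1 x g)

/-- A non-degenerate invariant supersymmetric *odd* bilinear form: it pairs `g0`
with `g1` (component `Bo`); like-parity pairings vanish by oddness, and
`B(f,f) = 0` for odd `f` is automatic. -/
structure OddNIS (S : SuperAlg K g0 g1) : Type where
  Bo : g0 →ₗ[K] g1 →ₗ[K] K
  nondeg0 : ∀ x, (∀ f, Bo x f = 0) → x = 0
  nondeg1 : ∀ f, (∀ x, Bo x f = 0) → f = 0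
  inv0 : ∀ (x y : g0) (f : g1), Bo (S.br0 x y) f = Bo x (S.br1 y f)
  inv1 : ∀ (x y : g0) (f : g1), Bo y (S.br1 x f) = Bo x (S.br1 y f)
  inv2 : ∀ f g h : g1, Bo (S.br11 f g) h = Bo (S.br11 g h) f

/-- An even derivation of a Lie superalgebra in characteristic 2. -/
structure EvenDer (S : SuperAlg K g0 g1) : Type where
  D0 : g0 →ₗ[K] g0
  D1 : g1 →ₗ[K] g1
  der0 : ∀ x y, D0 (S.br0 x y) = S.br0 (D0 x) y + S.br0 x (D0 y)
  der1 : ∀ x f, D1 (S.br1 x f) = S.br1 (D0 x) f + S.br1 x (D1 f)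
  der_sq : ∀ f, D0 (S.sq f) = S.br11 (D1 f) f

/-- An odd derivation of a Lie superalgebra in characteristic 2. -/
structure OddDer (S : SuperAlg K g0 g1) : Type where
  D0 : g0 →ₗ[K] g1
  D1 : g1 →ₗ[K] g0
  der0 : ∀ x y, D0 (S.br0 x y) = S.br1 x (D0 y) + S.br1 y (D0 x)
  der1 : ∀ x f, D1 (S.br1 x f) = S.br11 (D0 x) f + S.br0 x (D1 f)
  der_sq : ∀ f, D0 (S.sq f) = S.br1 (D1 f) f

/-- An isometry between Lie superalgebras endowed with even NIS forms: an even
linear bijection preserving brackets, squarings and the bilinear forms. -/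
structure EvenIsometry (S : SuperAlg K g0 g1) (N : EvenNIS K g0 g1 S)
    (S' : SuperAlg K h0 h1) (N' : EvenNIS K h0 h1 S') : Type where
  e0 : g0 ≃ₗ[K] h0
  e1 : g1 ≃ₗ[K] h1
  map_br0 : ∀ x y, e0 (S.br0 x y) = S'.br0 (e0 x) (e0 y)
  map_br1 : ∀ x f, e1 (S.br1 x f) = S'.br1 (e0 x) (e1 f)
  map_br11 : ∀ f g, e0 (S.br11 f g) = S'.br11 (e1 f) (e1 g)
  map_sq : ∀ f, e0 (S.sq f) = S'.sq (e1 f)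
  map_B0 : ∀ x y, N'.B0 (e0 x) (e0 y) = N.B0 x y
  map_B1 : ∀ f g, N'.B1 (e1 f) (e1 g) = N.B1 f g

/-- An isometry between Lie superalgebras endowed with odd NIS forms. -/
structure OddIsometry (S : SuperAlg K g0 g1) (N : OddNIS K g0 g1 S)
    (S' : SuperAlg K h0 h1) (N' : OddNIS K h0 h1 S') : Type where
  e0 : g0 ≃ₗ[K] h0
  e1 : g1 ≃ₗ[K] h1
  map_br0 : ∀ x y, e0 (S.br0 x y) = S'.br0 (e0 x) (e0 y)
  map_br1 : ∀ x f, e1 (S.br1 x f) = S'.br1 (e0 x) (e1 f)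
  map_br11 : ∀ f g, e0 (S.br11 f g) = S'.br11 (e1 f) (e1 g)
  map_sq : ∀ f, e0 (S.sq f) = S'.sq (e1 f)
  map_Bo : ∀ x f, N'.Bo (e0 x) (e1 f) = N.Bo x f

/-- A (graded) ideal of a Lie superalgebra in characteristic 2, given by its
even part `I0` and odd part `I1`. -/
def IsIdealPair (S : SuperAlg K g0 g1) (I0 : Submodule K g0) (I1 : Submodule K g1) : Prop :=
  (∀ x ∈ I0, ∀ y, S.br0 x y ∈ I0) ∧ (∀ x ∈ I0, ∀ f, S.br1 x f ∈ I1) ∧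
  (∀ f ∈ I1, ∀ x : g0, S.br1 x f ∈ I1) ∧ (∀ f ∈ I1, ∀ g, S.br11 f g ∈ I0) ∧
  (∀ f ∈ I1, S.sq f ∈ I0)

/-- Irreducibility of a NIS-Lie superalgebra with an even form: it is not the
direct sum of two nonzero mutually orthogonal ideals. -/
def EvenIrreducible (S : SuperAlg K g0 g1) (N : EvenNIS K g0 g1 S) : Prop :=
  ¬ ∃ (I0 J0 : Submodule K g0) (I1 J1 : Submodule K g1),
      IsIdealPair K g0 g1 S I0 I1 ∧ IsIdealPair K g0 g1 S J0 J1 ∧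
      (I0 ≠ ⊥ ∨ I1 ≠ ⊥) ∧ (J0 ≠ ⊥ ∨ J1 ≠ ⊥) ∧
      I0 ⊓ J0 = ⊥ ∧ I0 ⊔ J0 = ⊤ ∧ I1 ⊓ J1 = ⊥ ∧ I1 ⊔ J1 = ⊤ ∧
      (∀ x ∈ I0, ∀ y ∈ J0, N.B0 x y = 0) ∧ (∀ f ∈ I1, ∀ g ∈ J1, N.B1 f g = 0)

/-- Irreducibility of a NIS-Lie superalgebra with an odd form. -/
def OddIrreducible (S : SuperAlg K g0 g1) (N : OddNIS K g0 g1 S) : Prop :=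
  ¬ ∃ (I0 J0 : Submodule K g0) (I1 J1 : Submodule K g1),
      IsIdealPair K g0 g1 S I0 I1 ∧ IsIdealPair K g0 g1 S J0 J1 ∧
      (I0 ≠ ⊥ ∨ I1 ≠ ⊥) ∧ (J0 ≠ ⊥ ∨ J1 ≠ ⊥) ∧
      I0 ⊓ J0 = ⊥ ∧ I0 ⊔ J0 = ⊤ ∧ I1 ⊓ J1 = ⊥ ∧ I1 ⊔ J1 = ⊤ ∧
      (∀ x ∈ I0, ∀ g ∈ J1, N.Bo x g = 0) ∧ (∀ y ∈ J0, ∀ f ∈ I1, N.Bo y f = 0)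

/-- An ideal of a Lie superalgebra given as a pair of subsets (closed under the
vector space operations, brackets with arbitrary elements, and the squaring). -/
def IsIdealSet (S : SuperAlg K g0 g1) (I0 : Set g0) (I1 : Set g1) : Prop :=
  ((0 : g0) ∈ I0) ∧ (∀ x y, x ∈ I0 → y ∈ I0 → x + y ∈ I0) ∧
  (∀ (c : K) x, x ∈ I0 → c • x ∈ I0) ∧
  ((0 : g1) ∈ I1) ∧ (∀ f g, f ∈ I1 → g ∈ I1 → f + g ∈ I1) ∧
  (∀ (c : K) f, f ∈ I1 → c • f ∈ I1) ∧
  (∀ x ∈ I0, ∀ y, S.br0 x y ∈ I0) ∧ (∀ x ∈ I0, ∀ f, S.br1 x f ∈ I1) ∧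
  (∀ f ∈ I1, ∀ x : g0, S.br1 x f ∈ I1) ∧ (∀ f ∈ I1, ∀ g, S.br11 f g ∈ I0) ∧
  (∀ f ∈ I1, S.sq f ∈ I0)

/-- The even part of the center of a Lie superalgebra. -/
def zEven (S : SuperAlg K g0 g1) : Submodule K g0 :=
  (⨅ y : g0, LinearMap.ker (S.br0.flip y)) ⊓ (⨅ f : g1, LinearMap.ker (S.br1.flip f))

/-- The odd part of the center of a Lie superalgebra. -/
def zOdd (S : SuperAlg K g0 g1) : Submodule K g1 :=
  (⨅ x : g0, LinearMap.ker (S.br1 x)) ⊓ (⨅ g : g1, LinearMap.ker (S.br11.flip g))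

/-- The compatibility conditions between an even NIS `N`, an even derivation `D`
and a quadratic form `al` on the odd part, entering the `D_ev`-extension (even
form case): `B(Du,v)+B(u,Dv)=0`, `B(Du,u)=0` for even `u`, `al` is quadratic and
its polar form is `B(·,D·)`. -/
def DevDataEven (S : SuperAlg K g0 g1) (N : EvenNIS K g0 g1 S)
    (D : EvenDer K g0 g1 S) (al : g1 → K) : Prop :=
  (∀ x y : g0, N.B0 (D.D0 x) y + N.B0 x (D.D0 y) = 0) ∧
  (∀ f g : g1, N.B1 (D.D1 f) g + N.B1 f (D.D1 g) = 0) ∧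
  (∀ x : g0, N.B0 (D.D0 x) x = 0) ∧
  (∀ (c : K) (f : g1), al (c • f) = c * c * al f) ∧
  (∀ f g : g1, N.B1 f (D.D1 g) = al (f + g) - al f - al g)

/-- The structure constants of the `D_ev`-extension `g = Kx ⊕ a ⊕ Kx*` (even
form, even `x`, `x*`); an element of the even part is written `(r, u, s)` for
`r x + u + s x*`, and the constant `c` is the (arbitrary) value `B_g(x*,x*)`. -/
def DevExtEvenFormulas (S : SuperAlg K g0 g1) (N : EvenNIS K g0 g1 S)
    (D : EvenDer K g0 g1 S) (al : g1 → K) (c : K)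
    (T : SuperAlg K (K × g0 × K) g1) (M : EvenNIS K (K × g0 × K) g1 T) : Prop :=
  (∀ (r s r' s' : K) (u u' : g0),
      T.br0 (r, u, s) (r', u', s')
        = (N.B0 (D.D0 u) u', S.br0 u u' + s • D.D0 u' + s' • D.D0 u, 0)) ∧
  (∀ (r s : K) (u : g0) (f : g1), T.br1 (r, u, s) f = S.br1 u f + s • D.D1 f) ∧
  (∀ f : g1, T.sq f = (al f, S.sq f, 0)) ∧
  (∀ (r s r' s' : K) (u u' : g0),
      M.B0 (r, u, s) (r', u', s') = N.B0 u u' + r * s' + r' * s + c * (s * s')) ∧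
  (∀ f g : g1, M.B1 f g = N.B1 f g)

/-- The compatibility conditions between an even NIS `N`, an odd derivation `D`
and an even element `w = a₀`, entering the `D_od`-extension (even form case):
`B(Du,v) = B(u,Dv)`, `D² = ad_w`, `D(w) = 0`. -/
def DodDataEven (S : SuperAlg K g0 g1) (N : EvenNIS K g0 g1 S)
    (D : OddDer K g0 g1 S) (w : g0) : Prop :=
  (∀ (x : g0) (f : g1), N.B1 (D.D0 x) f = N.B0 x (D.D1 f)) ∧
  (∀ x : g0, D.D1 (D.D0 x) = S.br0 w x) ∧
  (∀ f : g1, D.D0 (D.D1 f) = S.br1 w f) ∧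
  D.D0 w = 0

/-- The structure constants of the `D_od`-extension `g = Kx ⊕ a ⊕ Kx*` (even
form, odd `x`, `x*`); an element of the odd part is written `(r, u, t)` for
`r x + u + t x*`. -/
def DodExtEvenFormulas (S : SuperAlg K g0 g1) (N : EvenNIS K g0 g1 S)
    (D : OddDer K g0 g1 S) (w : g0)
    (T : SuperAlg K g0 (K × g1 × K)) (M : EvenNIS K g0 (K × g1 × K) T) : Prop :=
  (∀ x y : g0, T.br0 x y = S.br0 x y) ∧
  (∀ (x : g0) (r t : K) (u : g1),
      T.br1 x (r, u, t) = (N.B1 (D.D0 x) u, S.br1 x u + t • D.D0 x, 0)) ∧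
  (∀ (r t : K) (u : g1), T.sq (r, u, t) = S.sq u + (t * t) • w + t • D.D1 u) ∧
  (∀ x y : g0, M.B0 x y = N.B0 x y) ∧
  (∀ (r t r' t' : K) (u u' : g1),
      M.B1 (r, u, t) (r', u', t') = N.B1 u u' + r * t' + r' * t)

/-- The compatibility conditions between an odd NIS `No`, an odd derivation `D`,
an even element `w = a₀` and a quadratic form `al`, entering the
`D_od`-extension (odd form case). -/
def DodDataOdd (S : SuperAlg K g0 g1) (No : OddNIS K g0 g1 S)
    (D : OddDer K g0 g1 S) (w : g0) (al : g1 → K) : Prop :=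
  (∀ x y : g0, No.Bo y (D.D0 x) + No.Bo x (D.D0 y) = 0) ∧
  (∀ f g : g1, No.Bo (D.D1 f) g + No.Bo (D.D1 g) f = 0) ∧
  (∀ x : g0, No.Bo x (D.D0 x) = 0) ∧
  (∀ x : g0, D.D1 (D.D0 x) = S.br0 w x) ∧
  (∀ f : g1, D.D0 (D.D1 f) = S.br1 w f) ∧
  D.D0 w = 0 ∧
  (∀ (c : K) (f : g1), al (c • f) = c * c * al f) ∧
  (∀ f g : g1, al (f + g) - al f - al g = No.Bo (D.D1 f) g)

/-- The structure constants of the `D_od`-extension `g = Kx ⊕ a ⊕ Ke` (odd form,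
even `x`, odd `e`); an even element is written `(r, u)` for `r x + u`, an odd
element `(v, μ)` for `v + μ e`. -/
def DodExtOddFormulas (S : SuperAlg K g0 g1) (No : OddNIS K g0 g1 S)
    (D : OddDer K g0 g1 S) (w : g0) (al : g1 → K) (m : K)
    (T : SuperAlg K (K × g0) (g1 × K)) (M : OddNIS K (K × g0) (g1 × K) T) : Prop :=
  (∀ (r r' : K) (x y : g0), T.br0 (r, x) (r', y) = (No.Bo y (D.D0 x), S.br0 x y)) ∧
  (∀ (r μ : K) (x : g0) (v : g1), T.br1 (r, x) (v, μ) = (S.br1 x v + μ • D.D0 x, 0)) ∧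
  (∀ (μ : K) (v : g1),
      T.sq (v, μ) = (μ * μ * m + al v, S.sq v + (μ * μ) • w + μ • D.D1 v)) ∧
  (∀ (r μ : K) (x : g0) (v : g1), M.Bo (r, x) (v, μ) = No.Bo x v + r * μ)

/-- The compatibility condition between an odd NIS `No` and an even derivation
`D`, entering the `D_ev`-extension (odd form case): `B(Du,v)+B(u,Dv)=0`. -/
def DevDataOdd (S : SuperAlg K g0 g1) (No : OddNIS K g0 g1 S)
    (D : EvenDer K g0 g1 S) : Prop :=
  ∀ (x : g0) (v : g1), No.Bo (D.D0 x) v + No.Bo x (D.D1 v) = 0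

/-- The structure constants of the `D_ev`-extension `g = Kx ⊕ a ⊕ Ke` (odd form,
odd `x`, even `e`); an even element is written `(u, ν)` for `u + ν e`, an odd
element `(μ, v)` for `μ x + v`. -/
def DevExtOddFormulas (S : SuperAlg K g0 g1) (No : OddNIS K g0 g1 S)
    (D : EvenDer K g0 g1 S)
    (T : SuperAlg K (g0 × K) (K × g1)) (M : OddNIS K (g0 × K) (K × g1) T) : Prop :=
  (∀ (ν ν' : K) (x y : g0),
      T.br0 (x, ν) (y, ν') = (S.br0 x y + ν • D.D0 y + ν' • D.D0 x, 0)) ∧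
  (∀ (ν μ : K) (x : g0) (v : g1),
      T.br1 (x, ν) (μ, v) = (No.Bo (D.D0 x) v, S.br1 x v + ν • D.D1 v)) ∧
  (∀ (μ : K) (v : g1), T.sq (μ, v) = (S.sq v, 0)) ∧
  (∀ (ν μ : K) (x : g0) (v : g1), M.Bo (x, ν) (μ, v) = No.Bo x v + ν * μ)

end Defs

end Char2DoubleExt

/-!
The double extension is built in two steps. First one adjoins to `a` an odd element `e = x*` that
acts as `D` and squares to `a₀`; this needs only `D² = ad_{a₀}` and `D(a₀) = 0`. Then one extends
centrally by `x` along the cocycle `ω(v, u + te) = B(D(v), u)`. The cocycle identities follow from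
the derivation rules for `D` and from `B([v, f], f) = B(v, [f, f]) = 0`. The self-adjointness of
`D` is what makes the orthogonal sum of `B` with the hyperbolic plane on `x`, `e` invariant.
-/

namespace Char2DoubleExt

section

variable {K : Type} [Field K] {g0 g1 : Type}
variable [AddCommGroup g0] [Module K g0] [AddCommGroup g1] [Module K g1]

namespace SuperAlg

variable (S : SuperAlg K g0 g1)
variable {V : Type} [AddCommGroup V] [Module K V]

theorem br0_comm [CharP K 2] (x y : g0) : S.br0 x y = S.br0 y x := by
  have hneg : -S.br0 x y = S.br0 y x := LinearMap.IsAlt.neg S.br0_self x y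
  linear_combination (norm := module) hneg + CharTwo.two_eq_zero (R := K) • S.br0 x y

theorem br11_self [CharP K 2] (f : g1) : S.br11 f f = 0 := by
  have hpolar : S.sq ((2 : K) • f) = S.sq f + S.sq f + S.br11 f f := by
    rw [two_smul, S.sq_add]
  rw [S.sq_smul] at hpolar
  linear_combination (norm := module) CharTwo.two_eq_zero (R := K) • S.sq f - hpolar

/-- A 2-cocycle of `S` with values in a trivial odd module `V`: the conditions under which
`[x, f] + ω x f` defines, without changing the squaring, a central extension of `S` by `V`. -/
structure IsOddCocycle (ω : g0 →ₗ[K] g1 →ₗ[K] V) : Prop where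
  map_br0 : ∀ x y f, ω (S.br0 x y) f = ω x (S.br1 y f) + ω y (S.br1 x f)
  map_sq : ∀ f g, ω (S.sq f) g = ω (S.br11 f g) f

/-- The central extension of `S` by a purely odd module `V` along the cocycle `ω`. -/
def centralExtension {ω : g0 →ₗ[K] g1 →ₗ[K] V} (hω : S.IsOddCocycle ω) :
    SuperAlg K g0 (V × g1) where
  br0 := S.br0
  br1 := LinearMap.mk₂ K (fun x f => (ω x f.2, S.br1 x f.2))
    (fun x y f => by simp) (fun c x f => by simp) (fun x f g => by simp)
    (fun c x f => by simp)
  br11 := S.br11.compl₁₂ (LinearMap.snd K V g1) (LinearMap.snd K V g1)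
  sq f := S.sq f.2
  sq_smul c f := S.sq_smul c f.2
  sq_add f g := S.sq_add f.2 g.2
  br0_self := S.br0_self
  br11_comm f g := S.br11_comm f.2 g.2
  jacobi0 := S.jacobi0
  act_br x y f := Prod.ext (hω.map_br0 x y f.2) (S.act_br x y f.2)
  jacobi_mix x f g := S.jacobi_mix x f.2 g.2
  sq_br0 f x := S.sq_br0 f.2 x
  sq_br1 f g := Prod.ext (hω.map_sq f.2 g.2) (S.sq_br1 f.2 g.2)

end SuperAlg

variable {S : SuperAlg K g0 g1}

namespace OddDer

variable (D : OddDer K g0 g1 S)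

theorem D0_br11 (f g : g1) : D.D0 (S.br11 f g) = S.br1 (D.D1 f) g + S.br1 (D.D1 g) f := by
  have h := D.der_sq (f + g)
  simp only [S.sq_add, map_add, LinearMap.add_apply, D.der_sq] at h
  linear_combination (norm := module) h

/-- `D² = ad_w` and `D w = 0`: the conditions under which an odd element that acts as `D` and
squares to `w` can be adjoined to `S`. -/
structure HasSquare (w : g0) : Prop where
  D1_D0 : ∀ x, D.D1 (D.D0 x) = S.br0 w x
  D0_D1 : ∀ f, D.D0 (D.D1 f) = S.br1 w f
  D0_eq_zero : D.D0 w = 0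

/-- The action of `g0` on `g1 ⊕ Ke`, where `e` is an odd element acting on `S` as `D`. -/
def extensionBr1 : g0 →ₗ[K] (g1 × K) →ₗ[K] (g1 × K) :=
  LinearMap.mk₂ K (fun x f => (S.br1 x f.1 + f.2 • D.D0 x, 0))
    (fun x y f => by ext <;> simp; module)
    (fun c x f => by ext <;> simp; module)
    (fun x f g => by ext <;> simp; module)
    (fun c x f => by ext <;> simp; module)

/-- The bracket of two elements of `g1 ⊕ Ke`, where `e` is an odd element acting on `S`
as `D`. -/
def extensionBr11 : (g1 × K) →ₗ[K] (g1 × K) →ₗ[K] g0 :=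
  LinearMap.mk₂ K (fun f g => S.br11 f.1 g.1 + f.2 • D.D1 g.1 + g.2 • D.D1 f.1)
    (fun f f' g => by simp; module)
    (fun c f g => by simp; module)
    (fun f g g' => by simp; module)
    (fun c f g => by simp; module)

theorem extensionBr1_apply (x : g0) (f : g1 × K) :
    D.extensionBr1 x f = (S.br1 x f.1 + f.2 • D.D0 x, 0) := rfl

theorem extensionBr11_apply (f g : g1 × K) :
    D.extensionBr11 f g = S.br11 f.1 g.1 + f.2 • D.D1 g.1 + g.2 • D.D1 f.1 := rfl

theorem extensionBr1_br0 (x y : g0) (f : g1 × K) :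
    D.extensionBr1 (S.br0 x y) f =
      D.extensionBr1 x (D.extensionBr1 y f) + D.extensionBr1 y (D.extensionBr1 x f) := by
  ext
  · simp only [extensionBr1_apply, Prod.fst_add, map_add, map_smul, S.act_br, D.der0]
    module
  · simp only [extensionBr1_apply, Prod.snd_add, add_zero]

theorem br0_extensionBr11 [CharP K 2] (x : g0) (f g : g1 × K) :
    S.br0 x (D.extensionBr11 f g) + D.extensionBr11 f (D.extensionBr1 x g) +
      D.extensionBr11 g (D.extensionBr1 x f) = 0 := by
  simp only [extensionBr1_apply, extensionBr11_apply, map_add, map_smul, D.der1,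
    S.br11_comm (D.D0 x)]
  linear_combination (norm := module) S.jacobi_mix x f.1 g.1 +
    CharTwo.two_eq_zero (R := K) • (f.2 • S.br0 x (D.D1 g.1) + g.2 • S.br0 x (D.D1 f.1) +
      g.2 • S.br11 f.1 (D.D0 x) + f.2 • S.br11 g.1 (D.D0 x) + (f.2 * g.2) • D.D1 (D.D0 x))

/-- The Lie superalgebra `S ⊕ Ke` in which the odd element `e` acts on `S` as `D` and squares
to `w`; the pair `(u, t)` stands for `u + te`. -/
def extension [CharP K 2] {w : g0} (hD : D.HasSquare w) : SuperAlg K g0 (g1 × K) where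
  br0 := S.br0
  br1 := D.extensionBr1
  br11 := D.extensionBr11
  sq f := S.sq f.1 + (f.2 * f.2) • w + f.2 • D.D1 f.1
  sq_smul c f := by
    simp only [Prod.smul_fst, Prod.smul_snd, S.sq_smul, map_smul, smul_eq_mul]
    module
  sq_add f g := by
    simp only [Prod.fst_add, Prod.snd_add, S.sq_add, map_add, extensionBr11_apply]
    linear_combination (norm := module) CharTwo.two_eq_zero (R := K) • ((f.2 * g.2) • w)
  br0_self := S.br0_self
  br11_comm f g := by
    simp only [extensionBr11_apply, S.br11_comm f.1 g.1]
    module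
  jacobi0 := S.jacobi0
  act_br := D.extensionBr1_br0
  jacobi_mix := D.br0_extensionBr11
  sq_br0 f x := by
    simp only [extensionBr1_apply, extensionBr11_apply, map_add, map_smul, LinearMap.add_apply,
      LinearMap.smul_apply, D.der1, S.br11_comm (D.D0 x), hD.D1_D0, S.sq_br0,
      S.br0_comm (D.D1 f.1)]
    linear_combination (norm := module)
      -(CharTwo.two_eq_zero (R := K) • (f.2 • S.br11 f.1 (D.D0 x)))
  sq_br1 f g := by
    ext
    · simp only [extensionBr1_apply, extensionBr11_apply]
      simp only [map_add, map_smul, LinearMap.add_apply, LinearMap.smul_apply, D.der_sq,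
        D.D0_br11, hD.D0_D1, hD.D0_eq_zero, S.sq_br1]
      linear_combination (norm := module)
        -(CharTwo.two_eq_zero (R := K) • (f.2 • S.br1 (D.D1 g.1) f.1))
    · rfl

end OddDer

namespace EvenNIS

variable (N : EvenNIS K g0 g1 S) (D : OddDer K g0 g1 S) {w : g0} (hD : D.HasSquare w)

theorem B1_br1_left (x : g0) (f g : g1) : N.B1 (S.br1 x f) g = N.B1 f (S.br1 x g) := by
  rw [N.inv1, N.symm0, N.inv2]

theorem B1_br1_comm (x : g0) (f g : g1) : N.B1 (S.br1 x f) g = N.B1 (S.br1 x g) f := by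
  rw [N.inv1, N.inv1, S.br11_comm]

theorem B1_br1_self [CharP K 2] (x : g0) (f : g1) : N.B1 (S.br1 x f) f = 0 := by
  rw [N.inv1, S.br11_self, map_zero]

theorem isOddCocycle_B1_D0 [CharP K 2] : S.IsOddCocycle (N.B1 ∘ₗ D.D0) where
  map_br0 x y f := by
    simp only [LinearMap.comp_apply, D.der0, map_add, LinearMap.add_apply, N.B1_br1_left]
    exact add_comm _ _
  map_sq f g := by
    simp only [LinearMap.comp_apply, D.der_sq, D.D0_br11, map_add, LinearMap.add_apply,
      N.B1_br1_self, add_zero]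
    exact N.B1_br1_comm _ _ _

/-- The pairing `B(Dv, u)` of `v` in `g0` with `u + te`, the cocycle of the central step of the
`D_od`-extension. -/
def dodCocycle : g0 →ₗ[K] (g1 × K) →ₗ[K] K :=
  (N.B1 ∘ₗ D.D0).compl₂ (LinearMap.fst K g1 K)

theorem dodCocycle_apply (x : g0) (f : g1 × K) :
    N.dodCocycle D x f = N.B1 (D.D0 x) f.1 := rfl

theorem isOddCocycle_dodCocycle [CharP K 2] : (D.extension hD).IsOddCocycle (N.dodCocycle D) where
  map_br0 x y f := by
    have hcocycle := (N.isOddCocycle_B1_D0 D).map_br0 x y f.1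
    have hsymm := N.symm1 (D.D0 x) (D.D0 y)
    simp only [LinearMap.comp_apply] at hcocycle
    simp only [dodCocycle_apply, OddDer.extension, OddDer.extensionBr1_apply, map_add,
      map_smul, smul_eq_mul]
    linear_combination hcocycle + f.2 * hsymm -
      f.2 * N.B1 (D.D0 x) (D.D0 y) * CharTwo.two_eq_zero (R := K)
  map_sq f g := by
    have hcocycle := (N.isOddCocycle_B1_D0 D).map_sq f.1 g.1
    simp only [LinearMap.comp_apply] at hcocycle
    simp only [dodCocycle_apply, OddDer.extension, OddDer.extensionBr11_apply, map_add, map_smul,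
      LinearMap.add_apply, LinearMap.smul_apply, hD.D0_D1, hD.D0_eq_zero, smul_zero, map_zero,
      LinearMap.zero_apply, add_zero, N.B1_br1_self, hcocycle, N.B1_br1_comm w f.1 g.1]

/-- The Lie superalgebra `Kx ⊕ S ⊕ Ke` underlying the `D_od`-extension; the triple `(r, u, t)`
stands for `rx + u + te`. -/
def dodExtension [CharP K 2] : SuperAlg K g0 (K × g1 × K) :=
  (D.extension hD).centralExtension (N.isOddCocycle_dodCocycle D hD)

theorem dodExtension_br1_apply [CharP K 2] (x : g0) (f : K × g1 × K) :
    (N.dodExtension D hD).br1 x f =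
      (N.B1 (D.D0 x) f.2.1, S.br1 x f.2.1 + f.2.2 • D.D0 x, 0) := rfl

theorem dodExtension_br11_apply [CharP K 2] (f g : K × g1 × K) :
    (N.dodExtension D hD).br11 f g =
      S.br11 f.2.1 g.2.1 + f.2.2 • D.D1 g.2.1 + g.2.2 • D.D1 f.2.1 := rfl

/-- The orthogonal sum of the odd part of `N` with the hyperbolic plane `Kx ⊕ Ke`. -/
def hyperbolicB1 : (K × g1 × K) →ₗ[K] (K × g1 × K) →ₗ[K] K :=
  LinearMap.mk₂ K (fun f g => N.B1 f.2.1 g.2.1 + f.1 * g.2.2 + g.1 * f.2.2)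
    (fun f f' g => by simp; ring)
    (fun c f g => by simp; ring)
    (fun f g g' => by simp; ring)
    (fun c f g => by simp; ring)

theorem hyperbolicB1_apply (f g : K × g1 × K) :
    N.hyperbolicB1 f g = N.B1 f.2.1 g.2.1 + f.1 * g.2.2 + g.1 * f.2.2 := rfl

theorem hyperbolicB1_comm (f g : K × g1 × K) : N.hyperbolicB1 f g = N.hyperbolicB1 g f := by
  rw [hyperbolicB1_apply, hyperbolicB1_apply, N.symm1]
  ring

theorem hyperbolicB1_self [CharP K 2] (f : K × g1 × K) : N.hyperbolicB1 f f = 0 := by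
  rw [hyperbolicB1_apply, N.alt1, zero_add, CharTwo.add_self_eq_zero]

theorem eq_zero_of_hyperbolicB1_eq_zero (f : K × g1 × K) (hf : ∀ g, N.hyperbolicB1 f g = 0) :
    f = 0 := by
  simp only [hyperbolicB1_apply] at hf
  ext
  · simpa using hf (0, 0, 1)
  · exact N.nondeg1 _ fun g => by simpa using hf (0, g, 0)
  · simpa using hf (1, 0, 0)

theorem hyperbolicB1_dodExtension_br1 [CharP K 2]
    (hadj : ∀ x f, N.B1 (D.D0 x) f = N.B0 x (D.D1 f)) (x : g0) (f g : K × g1 × K) :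
    N.hyperbolicB1 ((N.dodExtension D hD).br1 x f) g =
      N.B0 x ((N.dodExtension D hD).br11 f g) := by
  simp only [hyperbolicB1_apply, dodExtension_br1_apply, dodExtension_br11_apply, map_add,
    map_smul, LinearMap.add_apply, LinearMap.smul_apply, N.inv1, hadj, smul_eq_mul]
  ring

/-- The orthogonal sum of `N` with the hyperbolic plane `Kx ⊕ Ke`, as an invariant form on the
`D_od`-extension. -/
def dodExtensionNIS [CharP K 2] (hadj : ∀ x f, N.B1 (D.D0 x) f = N.B0 x (D.D1 f)) :
    EvenNIS K g0 (K × g1 × K) (N.dodExtension D hD) where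
  B0 := N.B0
  B1 := N.hyperbolicB1
  symm0 := N.symm0
  symm1 := N.hyperbolicB1_comm
  alt1 := N.hyperbolicB1_self
  nondeg0 := N.nondeg0
  nondeg1 := N.eq_zero_of_hyperbolicB1_eq_zero
  inv0 := N.inv0
  inv1 := N.hyperbolicB1_dodExtension_br1 D hD hadj
  inv2 f g x := by
    rw [N.symm0, (N.dodExtension D hD).br11_comm, N.hyperbolicB1_comm,
      N.hyperbolicB1_dodExtension_br1 D hD hadj]

end EvenNIS

end

theorem stmt3_general (K : Type) [Field K] [CharP K 2] (a0 a1 : Type)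
    [AddCommGroup a0] [Module K a0] [AddCommGroup a1] [Module K a1]
    (S : SuperAlg K a0 a1) (N : EvenNIS K a0 a1 S)
    (D : OddDer K a0 a1 S) (w : a0)
    (hdata : DodDataEven K a0 a1 S N D w) :
    ∃ (T : SuperAlg K a0 (K × a1 × K)) (M : EvenNIS K a0 (K × a1 × K) T),
      DodExtEvenFormulas K a0 a1 S N D w T M := by
  obtain ⟨hadj, hD1D0, hD0D1, hw⟩ := hdata
  have hD : D.HasSquare w := ⟨hD1D0, hD0D1, hw⟩
  exact ⟨N.dodExtension D hD, N.dodExtensionNIS D hD hadj, fun _ _ => rfl, fun _ _ _ _ => rfl,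
    fun _ _ _ => rfl, fun _ _ => rfl, fun _ _ _ _ _ _ => rfl⟩

/-- Theorem 3.4 of the paper: the `D_od`-extension of a
NIS-Lie superalgebra `(a, B_a)` in characteristic 2 with `B_a` even, by means of
an odd derivation `D` and an even element `a₀ = w` with `B(Du,v) = B(u,Dv)`,
`D² = ad_w` and `D(w) = 0`, is again a NIS-Lie superalgebra with an even form:
there is a Lie superalgebra structure on `g = Kx ⊕ a ⊕ Kx*` (with `x`, `x*`
odd), with the prescribed squaring, bracket and bilinear form. -/
theorem stmt3 (K : Type) [Field K] [CharP K 2] (a0 a1 : Type)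
    [AddCommGroup a0] [Module K a0] [AddCommGroup a1] [Module K a1]
    [FiniteDimensional K a0] [FiniteDimensional K a1]
    (S : SuperAlg K a0 a1) (N : EvenNIS K a0 a1 S)
    (D : OddDer K a0 a1 S) (w : a0)
    (hdata : DodDataEven K a0 a1 S N D w) :
    ∃ (T : SuperAlg K a0 (K × a1 × K)) (M : EvenNIS K a0 (K × a1 × K) T),
      DodExtEvenFormulas K a0 a1 S N D w T M :=
  stmt3_general K a0 a1 S N D w hdata

end Char2DoubleExt
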